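/- Let n ≥ 2 and let X be a multivariate normal random vector in ℝⁿ with mean μ ∈ ℝⁿ and positive definite covariance matrix Σ. For each permutation σ of {1,…,n}, let c_σ ∈ ℝⁿ be the vector with entries (c_σ)_{σ(i)} = 4i − 2n − 2 (a permutation of the coefficients 4i − 2n − 2, i = 1,…,n), and let a²_σ = c_σᵀ Σ c_σ. Then lim_{x→∞} (1/x²)·log P(S_n(X) > x) = −1/(2·max_σ a²_σ), where the maximum is over all n! permutations σ. -/

import Mathlib

open MeasureTheory ProbabilityTheory Matrix Filter Finset

/-- Characteristic function of a random vector `X : Ω → ℝⁿ` at `t ∈ ℝⁿ`: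
`E[exp(i⟨t,X⟩)]`. -/
noncomputable def charFn {Ω : Type*} [MeasurableSpace Ω] {n : ℕ}
    (P : Measure Ω) (X : Ω → (Fin n → ℝ)) (t : Fin n → ℝ) : ℂ :=
  ∫ ω, Complex.exp (((∑ i, t i * X ω i : ℝ) : ℂ) * Complex.I) ∂P

/-- The coefficient vector `c_σ` with entries `(c_σ)_{σ(i)} = 4i − 2n − 2`,
i.e. `c_σ j = 4(σ⁻¹(j)+1) − 2n − 2` (0-based `Fin n` indices). -/
noncomputable def permCoef {n : ℕ} (σ : Equiv.Perm (Fin n)) : Fin n → ℝ :=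
  fun j => (4 * ((σ.symm j : ℕ) + 1) : ℝ) - 2 * n - 2

/-!
Since `⟨c_σ, x⟩ = 2 ∑_{i<j} (x_{σ(j)} − x_{σ(i)})`, taking absolute values of the summands gives
`⟨c_σ, x⟩ ≤ S_n(x)`, with equality when `σ` sorts `x`. Hence the event `S_n(X) > x` is the union
over `σ` of the events `⟨c_σ, X⟩ > x`, each the upper tail of a one-dimensional
Gaussian of variance `a²_σ`. The Chernoff bound and a union bound give the upper estimate; the
single permutation of largest variance, with its density integrated over `(x, x + 1]`, gives the
lower one. Both are constants times `exp (-(x - b)² / (2 max_σ a²_σ))`, and the constants and the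
shifts `b` disappear after taking logarithms and dividing by `x²`.
-/

/-- The unnormalized Gini sum `S_n(x) = ∑ᵢ ∑ⱼ |xᵢ − xⱼ|`. -/
def giniSum {ι : Type*} [Fintype ι] (x : ι → ℝ) : ℝ :=
  ∑ i, ∑ j, |x i - x j|

lemma giniSum_comp_perm {ι : Type*} [Fintype ι] (σ : Equiv.Perm ι) (x : ι → ℝ) :
    giniSum (x ∘ σ) = giniSum x := by
  unfold giniSum
  rw [← Equiv.sum_comp σ fun i => ∑ j, |x i - x j|]
  exact Finset.sum_congr rfl fun i _ => Equiv.sum_comp σ fun j => |x (σ i) - x j|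

lemma giniSum_eq_two_mul_sum_Ioi {ι : Type*} [Fintype ι] [LinearOrder ι] [LocallyFiniteOrderTop ι]
    [LocallyFiniteOrderBot ι] (x : ι → ℝ) :
    giniSum x = 2 * ∑ i, ∑ j ∈ Ioi i, |x j - x i| := by
  calc giniSum x = ∑ i, ∑ j ∈ {i}ᶜ, |x j - x i| := by
        refine Finset.sum_congr rfl fun i _ => ?_
        rw [← Finset.sum_compl_add_sum {i}]
        simp only [sum_singleton, sub_self, abs_zero, add_zero, abs_sub_comm]
    _ = ∑ i, ∑ j ∈ Ioi i, (|x j - x i| + |x i - x j|) :=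
        (sum_sum_Ioi_add_eq_sum_sum_off_diag fun j i => |x j - x i|).symm
    _ = 2 * ∑ i, ∑ j ∈ Ioi i, |x j - x i| := by
        simp only [abs_sub_comm (x _) (x _), ← two_mul, Finset.mul_sum]

lemma sum_sum_Ioi_sub {R : Type*} [CommRing R] {n : ℕ} (x : Fin n → R) :
    ∑ i, ∑ j ∈ Ioi i, (x j - x i) = ∑ i : Fin n, (2 * (i : ℕ) + 1 - n : R) * x i := by
  have hswap : ∑ i, ∑ j ∈ Ioi i, x j = ∑ j, ∑ _i ∈ Iio j, x j :=
    Finset.sum_comm' (by simp)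
  have hcard (i : Fin n) : ((n - 1 - i : ℕ) : R) = n - 1 - (i : ℕ) := by
    rw [Nat.sub_sub, Nat.cast_sub (by omega), Nat.cast_add, Nat.cast_one, sub_sub]
  simp only [Finset.sum_sub_distrib, hswap, sum_const, Fin.card_Iio, Fin.card_Ioi, nsmul_eq_mul,
    hcard]
  rw [← Finset.sum_sub_distrib]
  exact Finset.sum_congr rfl fun i _ => by ring

lemma permCoef_dotProduct {n : ℕ} (σ : Equiv.Perm (Fin n)) (x : Fin n → ℝ) :
    permCoef σ ⬝ᵥ x = 2 * ∑ i, ∑ j ∈ Ioi i, (x (σ j) - x (σ i)) := by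
  rw [sum_sum_Ioi_sub fun i => x (σ i), dotProduct, Finset.mul_sum,
    ← Equiv.sum_comp σ fun i => permCoef σ i * x i]
  refine Finset.sum_congr rfl fun i _ => ?_
  rw [permCoef, Equiv.symm_apply_apply]
  ring

lemma permCoef_dotProduct_le_giniSum {n : ℕ} (σ : Equiv.Perm (Fin n)) (x : Fin n → ℝ) :
    permCoef σ ⬝ᵥ x ≤ giniSum x := by
  rw [permCoef_dotProduct, ← giniSum_comp_perm σ, giniSum_eq_two_mul_sum_Ioi]
  gcongr
  exact le_abs_self _

lemma permCoef_sort_dotProduct {n : ℕ} (x : Fin n → ℝ) :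
    permCoef (Tuple.sort x) ⬝ᵥ x = giniSum x := by
  rw [permCoef_dotProduct, ← giniSum_comp_perm (Tuple.sort x), giniSum_eq_two_mul_sum_Ioi]
  refine congrArg (2 * ·) (Finset.sum_congr rfl fun i _ => Finset.sum_congr rfl fun j hj => ?_)
  exact (abs_of_nonneg (sub_nonneg.2 (Tuple.monotone_sort x (mem_Ioi.1 hj).le))).symm

lemma lt_giniSum_iff_exists_perm {n : ℕ} {r : ℝ} {x : Fin n → ℝ} :
    r < giniSum x ↔ ∃ σ : Equiv.Perm (Fin n), r < permCoef σ ⬝ᵥ x :=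
  ⟨fun h => ⟨Tuple.sort x, by rwa [permCoef_sort_dotProduct]⟩,
    fun ⟨σ, h⟩ => h.trans_le (permCoef_dotProduct_le_giniSum σ x)⟩

lemma permCoef_ne_zero {n : ℕ} (hn : 2 ≤ n) (σ : Equiv.Perm (Fin n)) : permCoef σ ≠ 0 := by
  intro h
  have hentry : permCoef σ (σ ⟨0, by omega⟩) = 0 := congrFun h _
  have hn' : (2 : ℝ) ≤ n := by exact_mod_cast hn
  rw [permCoef, Equiv.symm_apply_apply] at hentry
  norm_num at hentry
  linarith

section CharFn

variable {Ω : Type*} [MeasurableSpace Ω] {P : Measure Ω} {n : ℕ} {X : Ω → Fin n → ℝ}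

lemma norm_charFn_le_one [IsProbabilityMeasure P] (t : Fin n → ℝ) : ‖charFn P X t‖ ≤ 1 := by
  simpa [charFn] using norm_integral_le_of_norm_le_const (μ := P)
    (.of_forall fun ω => (Complex.norm_exp_ofReal_mul_I (∑ i, t i * X ω i)).le)

lemma aemeasurable_dotProduct (hX : AEMeasurable X P) (c : Fin n → ℝ) :
    AEMeasurable (fun ω => c ⬝ᵥ X ω) P := by
  unfold dotProduct
  fun_prop

lemma charFun_map_dotProduct (hX : AEMeasurable X P) (c : Fin n → ℝ) (s : ℝ) :
    charFun (P.map fun ω => c ⬝ᵥ X ω) s = charFn P X (s • c) := by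
  rw [charFun_apply_real, integral_map (aemeasurable_dotProduct hX c) (by fun_prop)]
  simp only [charFn, dotProduct, Pi.smul_apply, smul_eq_mul, mul_assoc, ← Finset.mul_sum,
    Complex.ofReal_mul]

/-- `X ∼ N(μ, S)` under `P`, encoded by the characteristic function, so that singular `S` are
allowed and only the quadratic form of `S` matters. -/
def IsMultivariateNormal (P : Measure Ω) (X : Ω → Fin n → ℝ) (μ : Fin n → ℝ)
    (S : Matrix (Fin n) (Fin n) ℝ) : Prop :=
  ∀ t : Fin n → ℝ, charFn P X t =
    Complex.exp (((∑ i, t i * μ i : ℝ) : ℂ) * Complex.I - ((t ⬝ᵥ S *ᵥ t : ℝ) : ℂ) / 2)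

variable [IsProbabilityMeasure P] {μ : Fin n → ℝ} {S : Matrix (Fin n) (Fin n) ℝ}

lemma IsMultivariateNormal.dotProduct_mulVec_nonneg (h : IsMultivariateNormal P X μ S)
    (c : Fin n → ℝ) : 0 ≤ c ⬝ᵥ S *ᵥ c := by
  have hle : ‖charFn P X c‖ ≤ 1 := norm_charFn_le_one c
  rw [h c, Complex.norm_exp, Real.exp_le_one_iff] at hle
  have hhalf : 0 ≤ c ⬝ᵥ S *ᵥ c / 2 := by simpa using hle
  linarith

lemma IsMultivariateNormal.hasLaw_dotProduct (h : IsMultivariateNormal P X μ S)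
    (hX : AEMeasurable X P) (c : Fin n → ℝ) :
    HasLaw (fun ω => c ⬝ᵥ X ω) (gaussianReal (c ⬝ᵥ μ) (c ⬝ᵥ S *ᵥ c).toNNReal) P where
  aemeasurable := aemeasurable_dotProduct hX c
  map_eq := by
    have := Measure.isProbabilityMeasure_map (aemeasurable_dotProduct hX c)
    refine Measure.ext_of_charFun (funext fun s => ?_)
    have hmean : ∑ i, (s • c) i * μ i = s * c ⬝ᵥ μ := smul_dotProduct s c μ
    have hvar : (s • c) ⬝ᵥ S *ᵥ (s • c) = c ⬝ᵥ S *ᵥ c * s ^ 2 := by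
      rw [mulVec_smul, smul_dotProduct, dotProduct_smul, smul_eq_mul, smul_eq_mul]
      ring
    rw [charFun_map_dotProduct hX, charFun_gaussianReal, h, hmean, hvar,
      Real.coe_toNNReal _ (h.dotProduct_mulVec_nonneg c)]
    push_cast
    rfl

end CharFn

section GaussianTail

open Real
open scoped NNReal Topology

variable {Ω : Type*} [MeasurableSpace Ω] {P : Measure Ω}

lemma hasSubgaussianMGF_of_hasLaw_gaussianReal {Y : Ω → ℝ} {v V : ℝ≥0}
    (hY : HasLaw Y (gaussianReal 0 v) P) (hv : v ≤ V) : HasSubgaussianMGF Y V P where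
  integrable_exp_mul t := by
    have hint := integrable_exp_mul_gaussianReal (μ := 0) (v := v) t
    rw [← hY.map_eq] at hint
    exact hint.comp_aemeasurable hY.aemeasurable
  mgf_le t := by
    rw [mgf_gaussianReal hY.map_eq, zero_mul, zero_add]
    gcongr

lemma gaussianReal_real_Ioi_le {m b x : ℝ} {v V : ℝ≥0} (hm : m ≤ b) (hv : v ≤ V) (hx : b ≤ x) :
    (gaussianReal m v).real (Set.Ioi x) ≤ exp (-(x - b) ^ 2 / (2 * V)) := by
  have hlaw : HasLaw (fun y => y - m) (gaussianReal 0 v) (gaussianReal m v) := by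
    simpa using gaussianReal_sub_const (HasLaw.id (μ := gaussianReal m v)) m
  have hsub : HasSubgaussianMGF (fun y => y - m) V (gaussianReal m v) :=
    hasSubgaussianMGF_of_hasLaw_gaussianReal hlaw hv
  have hbx : 0 ≤ x - b := sub_nonneg.2 hx
  calc (gaussianReal m v).real (Set.Ioi x)
      ≤ (gaussianReal m v).real {y | x - b ≤ y - m} :=
        measureReal_mono fun y hy => sub_le_sub (le_of_lt hy) hm
    _ ≤ exp (-(x - b) ^ 2 / (2 * V)) := hsub.measure_ge_le hbx

lemma antitoneOn_gaussianPDFReal (m : ℝ) (v : ℝ≥0) :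
    AntitoneOn (gaussianPDFReal m v) (Set.Ici m) := by
  intro y (hy : m ≤ y) z _ hyz
  simp only [gaussianPDFReal]
  gcongr

lemma gaussianPDFReal_add_one_le_real_Ioi {m x : ℝ} {v : ℝ≥0} (hv : v ≠ 0) (hx : m ≤ x) :
    gaussianPDFReal m v (x + 1) ≤ (gaussianReal m v).real (Set.Ioi x) :=
  calc gaussianPDFReal m v (x + 1)
      = ∫ _ in Set.Ioc x (x + 1), gaussianPDFReal m v (x + 1) := by simp
    _ ≤ ∫ y in Set.Ioc x (x + 1), gaussianPDFReal m v y := by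
        refine setIntegral_mono_on (by simp) (integrable_gaussianPDFReal _ _).integrableOn
          measurableSet_Ioc fun y hy => ?_
        have hmy : m ≤ y := hx.trans hy.1.le
        exact antitoneOn_gaussianPDFReal m v hmy (hmy.trans hy.2) hy.2
    _ = (gaussianReal m v).real (Set.Ioc x (x + 1)) := by
        rw [measureReal_def, gaussianReal_apply_eq_integral _ hv, ENNReal.toReal_ofReal
          (integral_nonneg fun _ => gaussianPDFReal_nonneg _ _ _)]
    _ ≤ (gaussianReal m v).real (Set.Ioi x) := measureReal_mono Set.Ioc_subset_Ioi_self

lemma tendsto_add_neg_sq_div_div_sq (A b V : ℝ) :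
    Tendsto (fun x : ℝ => (A + -(x - b) ^ 2 / (2 * V)) / x ^ 2) atTop (𝓝 (-1 / (2 * V))) := by
  have hinv : Tendsto (fun x : ℝ => x⁻¹) atTop (𝓝 0) := tendsto_inv_atTop_zero
  have hlim : Tendsto (fun x : ℝ => A * x⁻¹ ^ 2 + -(1 - b * x⁻¹) ^ 2 / (2 * V)) atTop
      (𝓝 (A * 0 ^ 2 + -(1 - b * 0) ^ 2 / (2 * V))) :=
    ((hinv.pow 2).const_mul A).add ((((hinv.const_mul b).const_sub 1).pow 2).neg.div_const _)
  simp only [mul_zero, sub_zero, one_pow, ne_eq, OfNat.ofNat_ne_zero, not_false_eq_true, zero_pow,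
    zero_add] at hlim
  refine hlim.congr' ?_
  filter_upwards [eventually_ne_atTop 0] with x hx
  field_simp

lemma tendsto_log_div_sq_of_gaussian_bounds {f : ℝ → ℝ} {V C₁ C₂ b₁ b₂ : ℝ}
    (hC₁ : 0 < C₁) (hC₂ : 0 < C₂)
    (hlower : ∀ᶠ x in atTop, C₁ * exp (-(x - b₁) ^ 2 / (2 * V)) ≤ f x)
    (hupper : ∀ᶠ x in atTop, f x ≤ C₂ * exp (-(x - b₂) ^ 2 / (2 * V))) :
    Tendsto (fun x => log (f x) / x ^ 2) atTop (𝓝 (-1 / (2 * V))) := by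
  have log_mul_exp {C : ℝ} (hC : 0 < C) (y : ℝ) : log (C * exp y) = log C + y := by
    rw [log_mul hC.ne' (exp_ne_zero y), log_exp]
  refine tendsto_of_tendsto_of_tendsto_of_le_of_le'
    (tendsto_add_neg_sq_div_div_sq (log C₁) b₁ V)
    (tendsto_add_neg_sq_div_div_sq (log C₂) b₂ V) ?_ ?_
  · filter_upwards [hlower] with x hx
    rw [← log_mul_exp hC₁]
    gcongr
  · filter_upwards [hlower, hupper] with x hx hx'
    have hfx : 0 < f x := lt_of_lt_of_le (by positivity) hx
    rw [← log_mul_exp hC₂]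
    gcongr

variable {ι : Type*} {Y : ι → Ω → ℝ}

lemma le_measureReal_exists_lt_of_hasLaw_gaussianReal {m : ℝ} {v : ℝ≥0} {i : ι}
    (hY : HasLaw (Y i) (gaussianReal m v) P) (hv : v ≠ 0) {x : ℝ} (hx : m ≤ x) :
    (√(2 * π * v))⁻¹ * exp (-(x - (m - 1)) ^ 2 / (2 * v)) ≤ P.real {ω | ∃ i, x < Y i ω} := by
  have := hY.isFiniteMeasure
  calc (√(2 * π * v))⁻¹ * exp (-(x - (m - 1)) ^ 2 / (2 * v))
      = gaussianPDFReal m v (x + 1) := by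
        rw [gaussianPDFReal, sub_sub_eq_add_sub]
    _ ≤ (gaussianReal m v).real (Set.Ioi x) := gaussianPDFReal_add_one_le_real_Ioi hv hx
    _ = P.real {ω | x < Y i ω} := (hY.measureReal_eq (p := (x < ·)) measurableSet_Ioi).symm
    _ ≤ P.real {ω | ∃ i, x < Y i ω} := measureReal_mono fun _ hω => ⟨i, hω⟩

variable {m : ι → ℝ} {v : ι → ℝ≥0}

lemma measureReal_exists_lt_le_of_hasLaw_gaussianReal [Fintype ι]
    (hY : ∀ i, HasLaw (Y i) (gaussianReal (m i) (v i)) P) {b x : ℝ} {V : ℝ≥0}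
    (hm : ∀ i, m i ≤ b) (hv : ∀ i, v i ≤ V) (hx : b ≤ x) :
    P.real {ω | ∃ i, x < Y i ω} ≤ Fintype.card ι * exp (-(x - b) ^ 2 / (2 * V)) :=
  calc P.real {ω | ∃ i, x < Y i ω}
      ≤ ∑ i, P.real {ω | x < Y i ω} := by
        rw [Set.ofPred_exists]
        exact measureReal_iUnion_fintype_le _
    _ ≤ ∑ _i : ι, exp (-(x - b) ^ 2 / (2 * V)) := by
        gcongr with i
        rw [(hY i).measureReal_eq (p := (x < ·)) measurableSet_Ioi]
        exact gaussianReal_real_Ioi_le (hm i) (hv i) hx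
    _ = Fintype.card ι * exp (-(x - b) ^ 2 / (2 * V)) := by
        rw [sum_const, nsmul_eq_mul, card_univ]

theorem tendsto_log_measureReal_exists_lt_div_sq [Finite ι]
    (hY : ∀ i, HasLaw (Y i) (gaussianReal (m i) (v i)) P) {i₀ : ι} (hi₀ : v i₀ ≠ 0)
    (hmax : ∀ i, v i ≤ v i₀) :
    Tendsto (fun x => log (P.real {ω | ∃ i, x < Y i ω}) / x ^ 2) atTop (𝓝 (-1 / (2 * v i₀))) := by
  have := Fintype.ofFinite ι
  have : Nonempty ι := ⟨i₀⟩
  obtain ⟨b, hb⟩ := (Set.finite_range m).bddAbove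
  have hm (i : ι) : m i ≤ b := hb (Set.mem_range_self i)
  refine tendsto_log_div_sq_of_gaussian_bounds (C₁ := (√(2 * π * v i₀))⁻¹)
    (C₂ := Fintype.card ι) (b₁ := m i₀ - 1) (b₂ := b) (by positivity) (by positivity)
    ((eventually_ge_atTop (m i₀)).mono fun x hx => ?_)
    ((eventually_ge_atTop b).mono fun x hx => ?_)
  · exact le_measureReal_exists_lt_of_hasLaw_gaussianReal (hY i₀) hi₀ hx
  · exact measureReal_exists_lt_le_of_hasLaw_gaussianReal hY hm hmax hx

end GaussianTail

theorem gini_large_deviation_multivariate_normal_general {Ω : Type*} [MeasurableSpace Ω]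
    {P : Measure Ω} [IsProbabilityMeasure P] {n : ℕ} {X : Ω → Fin n → ℝ} (hX : AEMeasurable X P)
    {μ : Fin n → ℝ} {S : Matrix (Fin n) (Fin n) ℝ} (hgauss : IsMultivariateNormal P X μ S)
    (hpos : ∃ σ : Equiv.Perm (Fin n), 0 < permCoef σ ⬝ᵥ S *ᵥ permCoef σ) :
    Tendsto (fun x : ℝ => Real.log (P.real {ω | x < giniSum (X ω)}) / x ^ 2) atTop
      (nhds (-1 / (2 * Finset.univ.sup' Finset.univ_nonempty
        (fun σ : Equiv.Perm (Fin n) => permCoef σ ⬝ᵥ S *ᵥ permCoef σ)))) := by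
  obtain ⟨σ₀, -, hσ₀⟩ := Finset.exists_mem_eq_sup' Finset.univ_nonempty
    fun σ : Equiv.Perm (Fin n) => permCoef σ ⬝ᵥ S *ᵥ permCoef σ
  have hmax (σ : Equiv.Perm (Fin n)) :
      permCoef σ ⬝ᵥ S *ᵥ permCoef σ ≤ permCoef σ₀ ⬝ᵥ S *ᵥ permCoef σ₀ :=
    hσ₀ ▸ Finset.le_sup' (fun σ => permCoef σ ⬝ᵥ S *ᵥ permCoef σ) (Finset.mem_univ σ)
  have hσ₀_pos : 0 < permCoef σ₀ ⬝ᵥ S *ᵥ permCoef σ₀ :=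
    let ⟨σ, hσ⟩ := hpos
    hσ.trans_le (hmax σ)
  have hlim := tendsto_log_measureReal_exists_lt_div_sq
    (fun σ => hgauss.hasLaw_dotProduct hX (permCoef σ)) (i₀ := σ₀)
    (Real.toNNReal_pos.2 hσ₀_pos).ne' fun σ => Real.toNNReal_le_toNNReal (hmax σ)
  rw [Real.coe_toNNReal _ hσ₀_pos.le] at hlim
  simpa only [lt_giniSum_iff_exists_perm, hσ₀] using hlim

/-- if `n ≥ 2` and `X ∼ Nₙ(μ, Σ)` with `Σ` positive definite, then
`lim_{x→∞} (1/x²)·log P(Sₙ(X) > x) = −1/(2·max_σ a²_σ)`, where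
`Sₙ(X) = ∑ᵢ∑ⱼ |Xᵢ − Xⱼ|` is the unnormalized Gini sum and `a²_σ = c_σᵀ Σ c_σ` for the
permuted coefficient vectors `c_σ`. -/
theorem gini_large_deviation_multivariate_normal {Ω : Type*} [MeasurableSpace Ω]
    (P : Measure Ω) [IsProbabilityMeasure P] {n : ℕ} (hn : 2 ≤ n)
    (X : Ω → Fin n → ℝ) (hX : Measurable X)
    (μ : Fin n → ℝ) (S : Matrix (Fin n) (Fin n) ℝ) (hS : S.PosDef)
    (hgauss : ∀ t : Fin n → ℝ,
      charFn P X t = Complex.exp (((∑ i, t i * μ i : ℝ) : ℂ) * Complex.I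
        - ((t ⬝ᵥ S *ᵥ t : ℝ) : ℂ) / 2)) :
    Tendsto
      (fun x : ℝ => Real.log (P {ω | x < ∑ i : Fin n, ∑ j : Fin n, |X ω i - X ω j|}).toReal / x ^ 2)
      atTop
      (nhds (-1 / (2 * Finset.univ.sup' (Finset.univ_nonempty)
        (fun σ : Equiv.Perm (Fin n) => permCoef σ ⬝ᵥ S *ᵥ permCoef σ)))) := by
  have hpos : 0 < permCoef (1 : Equiv.Perm (Fin n)) ⬝ᵥ S *ᵥ permCoef 1 := by
    simpa using hS.dotProduct_mulVec_pos (permCoef_ne_zero hn 1)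
  exact gini_large_deviation_multivariate_normal_general hX.aemeasurable hgauss ⟨1, hpos⟩
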